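/- For every integer n ≥ 1, the theory PA⁻ + IΣn proves fairFRT^1_2(Σ_{n+1}): in every model M of PA⁻ + IΣn, for every x there exists y such that for every Σ_{n+1}-definable 2-coloring F of [0,y) there is a Σ_{n+1}-definable injection from [0,x) into [0,y) whose range is homogeneous for F. -/

import Mathlib

/- Shared development: first-order arithmetic in the language {0,1,+,·,<},
   the arithmetic hierarchy, fragments of arithmetic, and coded finite
   combinatorics inside models. -/

open FirstOrder Language

namespace ArithFC

/-- Function symbols of the language of arithmetic: 0, 1, +, ·. -/
inductive Func : ℕ → Type
  | zero : Func 0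
  | one : Func 0
  | add : Func 2
  | mul : Func 2

/-- Relation symbols of the language of arithmetic: <. -/
inductive Rel : ℕ → Type
  | lt : Rel 2

/-- The first-order language {0, 1, +, ·, <}. -/
def lang : Language :=
  { Functions := Func, Relations := Rel }

section Instances

variable (M : Type) [lang.Structure M]

instance : Zero M := ⟨Structure.funMap (L := lang) Func.zero ![]⟩
instance : One M := ⟨Structure.funMap (L := lang) Func.one ![]⟩
instance : Add M := ⟨fun x y => Structure.funMap (L := lang) Func.add ![x, y]⟩
instance : Mul M := ⟨fun x y => Structure.funMap (L := lang) Func.mul ![x, y]⟩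
instance : LT M := ⟨fun x y => Structure.RelMap (L := lang) Rel.lt ![x, y]⟩
instance : LE M := ⟨fun x y => x < y ∨ x = y⟩

end Instances

/-- The numeral `n` in a model. -/
def numM (M : Type) [lang.Structure M] : ℕ → M
  | 0 => 0
  | n + 1 => numM M n + 1

/-- `b` is nonstandard (greater than every numeral). -/
def Nonstd {M : Type} [lang.Structure M] (b : M) : Prop := ∀ n : ℕ, numM M n < b

/-- The atomic formula `t < u`. -/
def ltFm {α : Type} {n : ℕ} (t u : lang.Term (α ⊕ Fin n)) : lang.BoundedFormula α n :=
  BoundedFormula.rel (Rel.lt : lang.Relations 2) ![t, u]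

/-- Δ₀ formulas: built from atomic formulas by boolean connectives and
bounded universal quantification (this generates, up to logical equivalence,
the usual class of bounded formulas). -/
inductive IsDelta0 {α : Type} : ∀ n : ℕ, lang.BoundedFormula α n → Prop
  | falsum (n : ℕ) : IsDelta0 n BoundedFormula.falsum
  | equal (n : ℕ) (t u : lang.Term (α ⊕ Fin n)) : IsDelta0 n (BoundedFormula.equal t u)
  | rel (n l : ℕ) (R : lang.Relations l) (ts : Fin l → lang.Term (α ⊕ Fin n)) :
      IsDelta0 n (BoundedFormula.rel R ts)
  | imp (n : ℕ) {φ ψ : lang.BoundedFormula α n} :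
      IsDelta0 n φ → IsDelta0 n ψ → IsDelta0 n (φ.imp ψ)
  | bdAll (n : ℕ) (t : lang.Term (α ⊕ Fin n)) {φ : lang.BoundedFormula α (n + 1)} :
      IsDelta0 (n + 1) φ →
      IsDelta0 n
        (BoundedFormula.all ((ltFm (Term.var (Sum.inr (Fin.last n))) (t.liftAt 1 n)).imp φ))

mutual
  /-- Σ_m formulas. -/
  inductive SigmaFm {α : Type} : ℕ → ∀ n : ℕ, lang.BoundedFormula α n → Prop
    | delta0 (m n : ℕ) {φ : lang.BoundedFormula α n} : IsDelta0 n φ → SigmaFm m n φ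
    | ofPi (m n : ℕ) {φ : lang.BoundedFormula α n} : PiFm m n φ → SigmaFm (m + 1) n φ
    | ex (m n : ℕ) {φ : lang.BoundedFormula α (n + 1)} :
        SigmaFm (m + 1) (n + 1) φ → SigmaFm (m + 1) n φ.ex
  /-- Π_m formulas. -/
  inductive PiFm {α : Type} : ℕ → ∀ n : ℕ, lang.BoundedFormula α n → Prop
    | delta0 (m n : ℕ) {φ : lang.BoundedFormula α n} : IsDelta0 n φ → PiFm m n φ
    | ofSigma (m n : ℕ) {φ : lang.BoundedFormula α n} : SigmaFm m n φ → PiFm (m + 1) n φ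
    | all (m n : ℕ) {φ : lang.BoundedFormula α (n + 1)} :
        PiFm (m + 1) (n + 1) φ → PiFm (m + 1) n φ.all
end

/-- A `k`-ary relation on `M` is Σ_m-definable (with parameters from `M`). -/
def IsSigmaDef (m : ℕ) (M : Type) [lang.Structure M] {k : ℕ} (R : (Fin k → M) → Prop) : Prop :=
  ∃ (p : ℕ) (φ : lang.BoundedFormula (Fin k ⊕ Fin p) 0) (w : Fin p → M),
    SigmaFm m 0 φ ∧ ∀ v : Fin k → M, R v ↔ φ.Realize (Sum.elim v w) finZeroElim

/-- A subset of `M` is Σ_m-definable with parameters. -/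
def SigmaDef1 (m : ℕ) (M : Type) [lang.Structure M] (A : Set M) : Prop :=
  IsSigmaDef m M (k := 1) fun v => v 0 ∈ A

/-- A binary relation on `M` is Σ_m-definable with parameters. -/
def SigmaDef2 (m : ℕ) (M : Type) [lang.Structure M] (R : M → M → Prop) : Prop :=
  IsSigmaDef m M (k := 2) fun v => R (v 0) (v 1)

/-- A ternary relation on `M` is Σ_m-definable with parameters. -/
def SigmaDef3 (m : ℕ) (M : Type) [lang.Structure M] (R : M → M → M → Prop) : Prop :=
  IsSigmaDef m M (k := 3) fun v => R (v 0) (v 1) (v 2)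

/-- `M` is a model of PA⁻ (the nonnegative part of a discretely ordered
commutative semiring). -/
structure PAm (M : Type) [lang.Structure M] : Prop where
  add_assoc : ∀ x y z : M, x + y + z = x + (y + z)
  add_comm : ∀ x y : M, x + y = y + x
  mul_assoc : ∀ x y z : M, x * y * z = x * (y * z)
  mul_comm : ∀ x y : M, x * y = y * x
  ldistrib : ∀ x y z : M, x * (y + z) = x * y + x * z
  add_zero : ∀ x : M, x + 0 = x
  mul_zero : ∀ x : M, x * 0 = 0
  mul_one : ∀ x : M, x * 1 = x
  lt_trans : ∀ x y z : M, x < y → y < z → x < z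
  lt_irrefl : ∀ x : M, ¬x < x
  lt_total : ∀ x y : M, x < y ∨ x = y ∨ y < x
  add_lt_add : ∀ x y z : M, x < y → x + z < y + z
  mul_lt_mul : ∀ x y z : M, x < y → 0 < z → x * z < y * z
  sub_exists : ∀ x y : M, x < y → ∃ z, x + z = y
  zero_lt_one : (0 : M) < 1
  discrete : ∀ x : M, 0 < x → (1 : M) ≤ x
  zero_le : ∀ x : M, (0 : M) ≤ x

/-- `M` satisfies the Σ_m-induction scheme (with parameters). -/
def ISig (m : ℕ) (M : Type) [lang.Structure M] : Prop :=
  ∀ A : Set M, SigmaDef1 m M A → (0 : M) ∈ A → (∀ x, x ∈ A → x + 1 ∈ A) → ∀ x, x ∈ A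

/-- `M` satisfies the Σ_m-collection (bounding) scheme (with parameters). -/
def BSig (m : ℕ) (M : Type) [lang.Structure M] : Prop :=
  ∀ R : M → M → Prop, SigmaDef2 m M R → ∀ a : M,
    (∀ x, x < a → ∃ y, R x y) → ∃ b, ∀ x, x < a → ∃ y, y < b ∧ R x y

section Coding

variable {M : Type} [lang.Structure M]

/-- `z` is the Cantor pair `⟨x, y⟩`: `2z = (x+y)(x+y+1) + 2y`. -/
def IsPairC (z x y : M) : Prop := z + z = (x + y) * (x + y + 1) + (y + y)

/-- Gödel's β-function: `x = a mod ((i+1)·b + 1)`. -/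
def BetaC (a b i x : M) : Prop :=
  x < (i + 1) * b + 1 ∧ ∃ q, a = q * ((i + 1) * b + 1) + x

/-- The sequence coded by `s` (via a Cantor pair of β-function data) has value `x`
at place `i`. -/
def SeqAt (s i x : M) : Prop := ∃ a b, IsPairC s a b ∧ BetaC a b i x

/-- `c` codes the M-finite set `X` of cardinality `card`: `c = ⟨card, s⟩` where `s`
codes the strictly increasing enumeration of `X` of length `card`. -/
def CodesFinset (c : M) (X : Set M) (card : M) : Prop :=
  ∃ s, IsPairC c card s ∧
    (∀ i, i < card → ∃ x, x ∈ X ∧ SeqAt s i x) ∧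
    (∀ i j x y, i < j → j < card → SeqAt s i x → SeqAt s j y → x < y) ∧
    (∀ x, x ∈ X ↔ ∃ i, i < card ∧ SeqAt s i x)

/-- `X` is an M-finite (coded) set. -/
def MFinite (X : Set M) : Prop := ∃ c card : M, CodesFinset c X card

/-- `d` codes an `e`-element subset `D` of `[0, y)`, i.e. an element of `[y]^e`. -/
def CodesTupleIn (d e y : M) (D : Set M) : Prop :=
  CodesFinset d D e ∧ ∀ z ∈ D, z < y

/-- `f` codes a (finite) function defined on all of `[0, a)`. -/
def CodesFunOn (f a : M) : Prop :=
  ∀ x, x < a → (∃ y, SeqAt f x y) ∧ ∀ y y', SeqAt f x y → SeqAt f x y' → y = y'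

/-- `X` is an M-coded subset of `[0, a)`. -/
def MCodedSubset (a : M) (X : Set M) : Prop :=
  MFinite X ∧ ∀ x ∈ X, x < a

end Coding

/-- An `M`-ultrafilter on `a`: an ultrafilter of the Boolean algebra of
M-finite subsets of `[0, a)`. -/
structure MUltra (M : Type) [lang.Structure M] (a : M) where
  sets : Set (Set M)
  mem_coded : ∀ X ∈ sets, MCodedSubset a X
  univ_mem : {x : M | x < a} ∈ sets
  superset_mem : ∀ X Y : Set M, X ∈ sets → MCodedSubset a Y → X ⊆ Y → Y ∈ sets
  inter_mem : ∀ X Y : Set M, X ∈ sets → Y ∈ sets → X ∩ Y ∈ sets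
  empty_not_mem : (∅ : Set M) ∉ sets
  ultra : ∀ X : Set M, MCodedSubset a X → X ∈ sets ∨ {x : M | x < a ∧ x ∉ X} ∈ sets

section Principles

variable (M : Type) [lang.Structure M]

/-- `F` is (the graph of) a Σ_m-definable injection from `[0, y)` into `[0, x)`. -/
def SigmaInjRel (m : ℕ) (F : M → M → Prop) (y x : M) : Prop :=
  SigmaDef2 m M F ∧
    (∀ u, u < y → ∃ v, v < x ∧ F u v) ∧
    (∀ u v v', u < y → F u v → F u v' → v = v') ∧
    (∀ u u' v, u < y → u' < y → F u v → F u' v → u = u')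

/-- There exists a Σ_m-definable injection from `[0, y)` into `[0, x)`. -/
def ExSigmaInj (m : ℕ) (y x : M) : Prop := ∃ F : M → M → Prop, SigmaInjRel M m F y x

/-- There exists a Σ_m-definable injection from all of `M` into `[0, a)`. -/
def SigmaInjWhole (m : ℕ) (a : M) : Prop :=
  ∃ F : M → M → Prop, SigmaDef2 m M F ∧
    (∀ u, ∃ v, v < a ∧ F u v) ∧
    (∀ u v v', F u v → F u v' → v = v') ∧
    (∀ u u' v, F u v → F u' v → u = u')

/-- CARD(Σ_m): no Σ_m-definable multivalued map sends `M` injectively below `a`. -/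
def CARD (m : ℕ) : Prop :=
  ∀ F : M → M → Prop, SigmaDef2 m M F → ∀ a : M,
    (∀ x, ∃ y, y < a ∧ F x y) →
      ∃ x0 x1 y, x0 ≠ x1 ∧ y < a ∧ F x0 y ∧ F x1 y

/-- GPHP(Σ_m): for every `x` there is `y` with no Σ_m-definable injection of
`[0,y)` into `[0,x)`. -/
def GPHP (m : ℕ) : Prop := ∀ x : M, ∃ y : M, ¬ExSigmaInj M m y x

/-- WPHP(Σ_m): for `x > 0` there is no Σ_m-definable injection of `[0,2x)` into `[0,x)`. -/
def WPHP (m : ℕ) : Prop := ∀ x : M, 0 < x → ¬ExSigmaInj M m (x + x) x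

/-- `C` is a Σ_m-definable `k`-coloring of `[y]^e` (acting on codes of
`e`-element subsets of `[0,y)`, independently of the chosen code). -/
def IsColoring (m : ℕ) (e y k : M) (C : M → M → Prop) : Prop :=
  SigmaDef2 m M C ∧
    (∀ d D, CodesTupleIn d e y D → ∃ i, i < k ∧ C d i) ∧
    (∀ d d' D i i', CodesTupleIn d e y D → CodesTupleIn d' e y D → C d i → C d' i' → i = i')

/-- FRT^e_k(Σ_m): every Σ_m-definable `k`-coloring of some `[y]^e` has an
M-finite homogeneous set of cardinality `x`, for every `x`. -/
def FRT (m : ℕ) (e k : M) : Prop :=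
  ∀ x : M, ∃ y : M, ∀ C : M → M → Prop, IsColoring M m e y k C →
    ∃ (c : M) (H : Set M), CodesFinset c H x ∧ (∀ z ∈ H, z < y) ∧
      ∃ i, ∀ d D, CodesFinset d D e → D ⊆ H → C d i

/-- fairFRT^e_k(Σ_m): the homogeneous set is required to be given as the range of a
Σ_m-definable injection from `[0,x)` into `[0,y)`. -/
def FairFRT (m : ℕ) (e k : M) : Prop :=
  ∀ x : M, ∃ y : M, ∀ C : M → M → Prop, IsColoring M m e y k C →
    ∃ H : M → M → Prop, SigmaInjRel M m H x y ∧
      ∃ i, ∀ d D, CodesFinset d D e → (∀ z ∈ D, ∃ u, u < x ∧ H u z) → C d i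

/-- `C` is a Σ_m-definable `k`-coloring of `[0, y)`. -/
def IsColoring1 (m : ℕ) (y k : M) (C : M → M → Prop) : Prop :=
  SigmaDef2 m M C ∧
    (∀ z, z < y → ∃ i, i < k ∧ C z i) ∧
    (∀ z i i', z < y → C z i → C z i' → i = i')

/-- FRT¹_k(Σ_m): every Σ_m-definable `k`-coloring of some `[0,y)` has an M-finite
homogeneous set of cardinality `x`, for every `x`. -/
def FRT1 (m : ℕ) (k : M) : Prop :=
  ∀ x : M, ∃ y : M, ∀ C : M → M → Prop, IsColoring1 M m y k C →
    ∃ (c : M) (H : Set M), CodesFinset c H x ∧ (∀ z ∈ H, z < y) ∧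
      ∃ i, ∀ z ∈ H, C z i

/-- fairFRT¹_k(Σ_m). -/
def FairFRT1 (m : ℕ) (k : M) : Prop :=
  ∀ x : M, ∃ y : M, ∀ C : M → M → Prop, IsColoring1 M m y k C →
    ∃ H : M → M → Prop, SigmaInjRel M m H x y ∧
      ∃ i, ∀ u v, u < x → H u v → C v i

end Principles

section Approx

variable {M : Type} [lang.Structure M]

/-- `f` is (the graph of) a partial function. -/
def IsPartialFun (f : M → M → Prop) : Prop := ∀ x y y', f x y → f x y' → y = y'

/-- `s` codes an approximation to the partial function `f` of length `b`. -/
def IsApprox (f : M → M → Prop) (s b : M) : Prop :=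
  (∀ i, i < b → ∃ v, SeqAt s i v) ∧
    (∀ i u v x y, i + 1 < b → SeqAt s i u → SeqAt s (i + 1) v → x ≤ u → f x y → y ≤ v)

/-- `s` codes a `g`-stretched approximation to the partial function `f` of length `b`. -/
def IsStretchedApprox (f g : M → M → Prop) (s b : M) : Prop :=
  (∀ i, i < b → ∃ v, SeqAt s i v) ∧
    (∀ i u w v x y, i + 1 < b → SeqAt s i u → g u w → SeqAt s (i + 1) v →
      x ≤ w → f x y → y ≤ v)

/-- The eventual (limit) value of `fun s => h s ·` is `x`. -/
def EvLim (h : M → M → Prop) (x : M) : Prop := ∃ s : M, ∀ t, s < t → h t x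

end Approx

/-- PΣ_m: every partial Σ_m-definable function admits approximations of every length. -/
def PSig (m : ℕ) (M : Type) [lang.Structure M] : Prop :=
  ∀ f : M → M → Prop, SigmaDef2 m M f → IsPartialFun f → ∀ b : M, ∃ s, IsApprox f s b

section Extensions

variable (M N : Type) [lang.Structure M] [lang.Structure N]

/-- `g : M → N` is Σ_m-elementary: Σ_m formulas with parameters from `M` transfer. -/
def SigmaElem (m : ℕ) (g : M → N) : Prop :=
  ∀ (p : ℕ) (φ : lang.BoundedFormula (Fin p) 0), SigmaFm m 0 φ →
    ∀ v : Fin p → M, (φ.Realize v finZeroElim ↔ φ.Realize (g ∘ v) finZeroElim)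

/-- The extension `g : M → N` is cofinal. -/
def Cofinal (g : M → N) : Prop := ∀ z : N, ∃ x : M, z ≤ g x

/-- `[0,a]^M = [0,a]^N`: every element of `N` below `g a` comes from `M`. -/
def SameBelow (g : M → N) (a : M) : Prop := ∀ z : N, z ≤ g a → ∃ x : M, g x = z

end Extensions

section Ramsey

variable {M : Type} [lang.Structure M]

/-- `f` is an M-coded `k`-coloring of `[y]^e` (assigning colors to codes of
`e`-subsets of `[0,y)`, independently of the code). -/
def CodedColoring (f e y k : M) : Prop :=
  (∀ d D, CodesTupleIn d e y D → ∃ i, i < k ∧ SeqAt f d i) ∧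
    (∀ d d' D i i', CodesTupleIn d e y D → CodesTupleIn d' e y D →
      SeqAt f d i → SeqAt f d' i' → i = i')

/-- The coded coloring `f` of `[y]^e` has an M-coded homogeneous set of cardinality `x`. -/
def CodedHomog (f e y x : M) : Prop :=
  ∃ (c : M) (H : Set M), CodesFinset c H x ∧ (∀ z ∈ H, z < y) ∧
    ∃ i, ∀ d D, CodesFinset d D e → D ⊆ H → SeqAt f d i

/-- `y = r(x, e, k)`: `y` is the least size guaranteeing coded homogeneous sets of
cardinality `x` for all coded `k`-colorings of `e`-subsets. -/
def IsRamsey (x e k y : M) : Prop :=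
  (∀ f, CodedColoring f e y k → CodedHomog f e y x) ∧
    (∀ y', y' < y → ∃ f, CodedColoring f e y' k ∧ ¬CodedHomog f e y' x)

/-- `y = r^(b)(x, e, k)`: the `b`-th iterate of the Ramsey function inside `M`. -/
def IterRamsey (x e k b y : M) : Prop :=
  ∃ s : M, SeqAt s 0 x ∧ SeqAt s b y ∧ (∀ i, i ≤ b → ∃ u, SeqAt s i u) ∧
    (∀ i u v, i < b → SeqAt s i u → SeqAt s (i + 1) v → IsRamsey u e k v)

end Ramsey

end ArithFC

namespace ArithFC

section Helpers

open BoundedFormula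

theorem realize_lift_snoc {M : Type} [lang.Structure M] {α : Type} {n : ℕ}
    (t : lang.Term (α ⊕ Fin n)) (v : α → M) (xs : Fin n → M) (a : M) :
    (t.liftAt 1 n).realize (Sum.elim v (Fin.snoc xs a : Fin (n+1) → M)) =
      t.realize (Sum.elim v xs) := by
  rw [Term.realize_liftAt]
  congr 1
  funext x
  rcases x with x | x
  · rfl
  · have : (Fin.castAdd 1 x) = Fin.castSucc x := rfl
    simp [this]

theorem realize_ltFm {M : Type} [lang.Structure M] {α : Type} {n : ℕ}
    (t u : lang.Term (α ⊕ Fin n)) (v : α → M) (xs : Fin n → M) :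
    (ltFm t u).Realize v xs ↔ t.realize (Sum.elim v xs) < u.realize (Sum.elim v xs) := by
  have : (![t.realize (Sum.elim v xs), u.realize (Sum.elim v xs)] : Fin 2 → M) =
    fun i => (![t, u] i).realize (Sum.elim v xs) := by
      funext i; fin_cases i <;> rfl
  show Structure.RelMap _ _ ↔ Structure.RelMap _ _
  rw [this]

/-- extension of a substitution under a binder -/
def upS {α β : Type} {k j : ℕ} (σ : α ⊕ Fin k → lang.Term (β ⊕ Fin j)) :
    α ⊕ Fin (k+1) → lang.Term (β ⊕ Fin (j+1)) :=
  Sum.elim (fun a => (σ (Sum.inl a)).liftAt 1 j)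
    (Fin.snoc (α := fun _ => lang.Term (β ⊕ Fin (j+1)))
      (fun i => (σ (Sum.inr i)).liftAt 1 j) (Term.var (Sum.inr (Fin.last j))))

theorem upS_inl {M : Type} [lang.Structure M] {α β : Type} {k j : ℕ}
    (σ : α ⊕ Fin k → lang.Term (β ⊕ Fin j)) (u : β → M) (xs : Fin j → M) (a : M) :
    (fun i => (upS σ (Sum.inl i)).realize (Sum.elim u (Fin.snoc xs a : Fin (j+1) → M))) =
      fun i => (σ (Sum.inl i)).realize (Sum.elim u xs) := by
  funext i
  simp [upS, realize_lift_snoc]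

theorem upS_inr {M : Type} [lang.Structure M] {α β : Type} {k j : ℕ}
    (σ : α ⊕ Fin k → lang.Term (β ⊕ Fin j)) (u : β → M) (xs : Fin j → M) (a : M) :
    (fun i => (upS σ (Sum.inr i)).realize (Sum.elim u (Fin.snoc xs a : Fin (j+1) → M))) =
      (Fin.snoc (fun i => (σ (Sum.inr i)).realize (Sum.elim u xs)) a : Fin (k+1) → M) := by
  funext i
  refine Fin.lastCases ?_ (fun i => ?_) i
  · simp [upS]
  · simp [upS, realize_lift_snoc]

theorem realize_sub {M : Type} [lang.Structure M] {α β : Type} {k j : ℕ}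
    (σ : α ⊕ Fin k → lang.Term (β ⊕ Fin j)) (t : lang.Term (α ⊕ Fin k)) (u : β → M)
    (xs : Fin j → M) :
    (t.subst σ).realize (Sum.elim u xs) =
      t.realize (Sum.elim (fun a => (σ (Sum.inl a)).realize (Sum.elim u xs))
        (fun i => (σ (Sum.inr i)).realize (Sum.elim u xs))) := by
  rw [Term.realize_subst]
  congr 1
  funext x
  rcases x with x | x <;> rfl

/-- semantic substitution relation between formulas -/
def IsSub (M : Type) [lang.Structure M] {α β : Type} {k j : ℕ}
    (σ : α ⊕ Fin k → lang.Term (β ⊕ Fin j))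
    (φ : lang.BoundedFormula α k) (ψ : lang.BoundedFormula β j) : Prop :=
  ∀ (u : β → M) (xs : Fin j → M), ψ.Realize u xs ↔
    φ.Realize (fun a => (σ (Sum.inl a)).realize (Sum.elim u xs))
      (fun i => (σ (Sum.inr i)).realize (Sum.elim u xs))

theorem d0_subst (M : Type) [lang.Structure M] {α β : Type} {k : ℕ}
    {φ : lang.BoundedFormula α k} (h : IsDelta0 k φ) :
    ∀ {j : ℕ} (σ : α ⊕ Fin k → lang.Term (β ⊕ Fin j)),
      ∃ ψ : lang.BoundedFormula β j, IsDelta0 j ψ ∧ IsSub M σ φ ψ := by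
  induction h with
  | falsum n => intro j σ; exact ⟨_, IsDelta0.falsum j, fun u xs => Iff.rfl⟩
  | equal n t s =>
    intro j σ
    refine ⟨_, IsDelta0.equal j (t.subst σ) (s.subst σ), fun u xs => ?_⟩
    simp only [BoundedFormula.Realize, realize_sub]
  | rel n l R ts =>
    intro j σ
    refine ⟨_, IsDelta0.rel j l R (fun i => (ts i).subst σ), fun u xs => ?_⟩
    simp only [BoundedFormula.Realize, realize_sub]
  | imp n h1 h2 ih1 ih2 =>
    intro j σ
    obtain ⟨ψ1, d1, e1⟩ := ih1 σ
    obtain ⟨ψ2, d2, e2⟩ := ih2 σ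
    refine ⟨_, IsDelta0.imp j d1 d2, fun u xs => ?_⟩
    simp only [BoundedFormula.Realize, e1 u xs, e2 u xs]
  | bdAll n t h ih =>
    intro j σ
    obtain ⟨ψ, d, e⟩ := ih (upS σ)
    refine ⟨_, IsDelta0.bdAll j (t.subst σ) d, fun u xs => ?_⟩
    simp only [BoundedFormula.Realize, realize_ltFm, e u _, realize_lift_snoc, realize_sub,
      upS_inl, upS_inr, Term.realize_var, Sum.elim_inr, Fin.snoc_last]

mutual
theorem sig_subst (M : Type) [lang.Structure M] {α β : Type} : ∀ {m k : ℕ}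
    {φ : lang.BoundedFormula α k} (_ : SigmaFm m k φ)
    {j : ℕ} (σ : α ⊕ Fin k → lang.Term (β ⊕ Fin j)),
      ∃ ψ : lang.BoundedFormula β j, SigmaFm m j ψ ∧ IsSub M σ φ ψ
  | _, _, _, .delta0 m n h, j, σ => by
    obtain ⟨ψ, d, e⟩ := d0_subst M h σ
    exact ⟨ψ, .delta0 m j d, e⟩
  | _, _, _, .ofPi m n h, j, σ => by
    obtain ⟨ψ, d, e⟩ := pi_subst M h σ
    exact ⟨ψ, .ofPi m j d, e⟩
  | _, _, _, .ex m n h, j, σ => by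
    obtain ⟨ψ, d, e⟩ := sig_subst M h (upS σ)
    refine ⟨_, .ex m j d, fun u xs => ?_⟩
    simp only [BoundedFormula.realize_ex, e u _, upS_inl, upS_inr]
theorem pi_subst (M : Type) [lang.Structure M] {α β : Type} : ∀ {m k : ℕ}
    {φ : lang.BoundedFormula α k} (_ : PiFm m k φ)
    {j : ℕ} (σ : α ⊕ Fin k → lang.Term (β ⊕ Fin j)),
      ∃ ψ : lang.BoundedFormula β j, PiFm m j ψ ∧ IsSub M σ φ ψ
  | _, _, _, .delta0 m n h, j, σ => by
    obtain ⟨ψ, d, e⟩ := d0_subst M h σ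
    exact ⟨ψ, .delta0 m j d, e⟩
  | _, _, _, .ofSigma m n h, j, σ => by
    obtain ⟨ψ, d, e⟩ := sig_subst M h σ
    exact ⟨ψ, .ofSigma m j d, e⟩
  | _, _, _, .all m n h, j, σ => by
    obtain ⟨ψ, d, e⟩ := pi_subst M h (upS σ)
    refine ⟨_, .all m j d, fun u xs => ?_⟩
    simp only [BoundedFormula.realize_all, e u _, upS_inl, upS_inr]
end

variable {M : Type} [lang.Structure M]

/-- term functions with parameters -/
def TF {k : ℕ} (f : (Fin k → M) → M) : Prop :=
  ∃ t : lang.Term (M ⊕ Fin k), ∀ v, f v = t.realize (Sum.elim id v)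

def TM {j k : ℕ} (g : (Fin j → M) → Fin k → M) : Prop := ∀ i, TF fun v => g v i

theorem TF.const {k : ℕ} (a : M) : TF (fun _ : Fin k → M => a) :=
  ⟨Term.var (Sum.inl a), fun _ => rfl⟩
theorem TM.id {k : ℕ} : TM (fun v : Fin k → M => v) :=
  fun i => ⟨Term.var (Sum.inr i), fun _ => rfl⟩
theorem TM.app {j k : ℕ} {g : (Fin j → M) → Fin k → M} (h : TM g) (i : Fin k) :
    TF fun v => g v i := h i
theorem TM.init {j k : ℕ} {g : (Fin j → M) → Fin (k+1) → M} (h : TM g) :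
    TM fun v => (Fin.init (g v) : Fin k → M) := fun i => h i.castSucc
theorem TM.snoc {j k : ℕ} {g : (Fin j → M) → Fin k → M} {f : (Fin j → M) → M}
    (h : TM g) (hf : TF f) : TM fun v => (Fin.snoc (g v) (f v) : Fin (k+1) → M) := by
  intro i
  refine Fin.lastCases ?_ (fun i => ?_) i
  · simpa using hf
  · simpa using h i
theorem TM.last {j k : ℕ} {g : (Fin j → M) → Fin (k+1) → M} (h : TM g) :
    TF fun v => g v (Fin.last k) := h _
theorem TF.add {k : ℕ} {f g : (Fin k → M) → M} (hf : TF f) (hg : TF g) :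
    TF fun v => f v + g v := by
  obtain ⟨t, ht⟩ := hf
  obtain ⟨s, hs⟩ := hg
  refine ⟨Term.func (L := lang) (l := 2) Func.add ![t, s], fun v => ?_⟩
  beta_reduce
  rw [ht, hs]
  show Structure.funMap _ _ = Structure.funMap _ _
  congr 1
  funext i; fin_cases i <;> rfl
theorem TF.mul {k : ℕ} {f g : (Fin k → M) → M} (hf : TF f) (hg : TF g) :
    TF fun v => f v * g v := by
  obtain ⟨t, ht⟩ := hf
  obtain ⟨s, hs⟩ := hg
  refine ⟨Term.func (L := lang) (l := 2) Func.mul ![t, s], fun v => ?_⟩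
  beta_reduce
  rw [ht, hs]
  show Structure.funMap _ _ = Structure.funMap _ _
  congr 1
  funext i; fin_cases i <;> rfl

/-- semantic Σ_m with one quantifier per block -/
def Sg : ∀ (m : ℕ) {k : ℕ}, ((Fin k → M) → Prop) → Prop
  | 0, k, P => ∃ φ : lang.BoundedFormula M k, IsDelta0 k φ ∧ ∀ xs, P xs ↔ φ.Realize id xs
  | m + 1, k, P => ∃ S : (Fin (k+1) → M) → Prop,
      Sg m (fun v => ¬ S v) ∧ ∀ xs, P xs ↔ ∃ y, S (Fin.snoc xs y)

theorem Sg.congr {m k : ℕ} {P Q : (Fin k → M) → Prop} (h : Sg m P) (e : ∀ v, P v ↔ Q v) :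
    Sg m Q := by
  have : P = Q := funext fun v => propext (e v)
  exact this ▸ h

theorem Sg.subst {m : ℕ} : ∀ {k j : ℕ} {P : (Fin k → M) → Prop} {g : (Fin j → M) → Fin k → M},
    Sg m P → TM g → Sg m (fun v => P (g v)) := by
  induction m with
  | zero =>
    rintro k j P g ⟨φ, d, e⟩ hg
    choose t ht using hg
    obtain ⟨ψ, d', e'⟩ := d0_subst M d
      (Sum.elim (fun a => Term.var (Sum.inl a)) t : M ⊕ Fin k → lang.Term (M ⊕ Fin j))
    refine ⟨ψ, d', fun xs => ?_⟩
    beta_reduce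
    rw [e, e' id xs]
    have : g xs = fun i => (t i).realize (Sum.elim id xs) := funext fun i => ht i xs
    rw [this]
    rfl
  | succ m ih =>
    rintro k j P g ⟨S, d, e⟩ hg
    refine ⟨fun v => S (Fin.snoc (g (Fin.init v)) (v (Fin.last j))), ?_, fun xs => ?_⟩
    · refine ih (g := fun v : Fin (j+1) → M =>
        (Fin.snoc (g (Fin.init v)) (v (Fin.last j)) : Fin (k+1) → M)) d ?_
      refine TM.snoc ?_ TM.id.last
      intro i
      obtain ⟨t, ht⟩ := hg i
      refine ⟨t.liftAt 1 j, fun v => ?_⟩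
      conv_rhs => rw [← Fin.snoc_init_self v]
      rw [realize_lift_snoc, ht]
    · simp [e]

theorem Sg.not0 {k : ℕ} {P : (Fin k → M) → Prop} (h : Sg 0 P) : Sg 0 fun v => ¬ P v := by
  obtain ⟨φ, d, e⟩ := h
  refine ⟨_, .imp k d (.falsum k), fun xs => ?_⟩
  simp only [BoundedFormula.Realize, e]

theorem Sg.imp0 {k : ℕ} {P Q : (Fin k → M) → Prop} (h : Sg 0 P) (h' : Sg 0 Q) :
    Sg 0 fun v => P v → Q v := by
  obtain ⟨φ, d, e⟩ := h
  obtain ⟨φ', d', e'⟩ := h'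
  refine ⟨_, .imp k d d', fun xs => ?_⟩
  simp only [BoundedFormula.Realize, e, e']

theorem Sg.eq0 {k : ℕ} {f g : (Fin k → M) → M} (hf : TF f) (hg : TF g) :
    Sg 0 fun v => f v = g v := by
  obtain ⟨t, ht⟩ := hf
  obtain ⟨s, hs⟩ := hg
  refine ⟨_, .equal k t s, fun xs => ?_⟩
  simp only [BoundedFormula.Realize, ht, hs]

theorem Sg.lt0 {k : ℕ} {f g : (Fin k → M) → M} (hf : TF f) (hg : TF g) :
    Sg 0 fun v => f v < g v := by
  obtain ⟨t, ht⟩ := hf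
  obtain ⟨s, hs⟩ := hg
  refine ⟨_, .rel k 2 Rel.lt ![t, s], fun xs => ?_⟩
  beta_reduce
  rw [ht, hs]
  exact (realize_ltFm t s id xs).symm

theorem Sg.ball0 {k : ℕ} {P : (Fin (k+1) → M) → Prop} {f : (Fin k → M) → M}
    (h : Sg 0 P) (hf : TF f) : Sg 0 fun v => ∀ i, i < f v → P (Fin.snoc v i) := by
  obtain ⟨t, ht⟩ := hf
  obtain ⟨φ, d, e⟩ := h
  refine ⟨_, .bdAll k t d, fun xs => ?_⟩
  simp only [BoundedFormula.Realize, realize_ltFm, realize_lift_snoc, ht, e,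
    Term.realize_var, Sum.elim_inr, Fin.snoc_last]

theorem Sg.ofPi {m k : ℕ} {P : (Fin k → M) → Prop} (h : Sg m fun v => ¬ P v) :
    Sg (m+1) P :=
  ⟨fun v => P (Fin.init v), h.subst (g := fun v : Fin (k+1) → M => (Fin.init v : Fin k → M))
    TM.id.init, fun xs => by simp⟩

theorem Sg.succ {m : ℕ} : ∀ {k : ℕ} {P : (Fin k → M) → Prop}, Sg m P → Sg (m+1) P := by
  induction m with
  | zero => intro k P h; exact Sg.ofPi h.not0
  | succ m ih =>
    rintro k P ⟨S, d, e⟩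
    exact ⟨S, ih d, e⟩

theorem Sg.of_zero {m k : ℕ} {P : (Fin k → M) → Prop} (h : Sg 0 P) : Sg m P := by
  induction m with
  | zero => exact h
  | succ m ih => exact ih.succ

/-- the closure properties -/
structure Cl (M : Type) [lang.Structure M] (m : ℕ) : Prop where
  or : ∀ {k : ℕ} {P Q : (Fin k → M) → Prop}, Sg m P → Sg m Q → Sg m fun v => P v ∨ Q v
  and : ∀ {k : ℕ} {P Q : (Fin k → M) → Prop}, Sg m P → Sg m Q → Sg m fun v => P v ∧ Q v
  bex : ∀ {k : ℕ} {P : (Fin (k+1) → M) → Prop} {f : (Fin k → M) → M}, Sg m P → TF f →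
    Sg m fun v => ∃ i, i < f v ∧ P (Fin.snoc v i)
  ball : ∀ {k : ℕ} {P : (Fin (k+1) → M) → Prop} {f : (Fin k → M) → M}, Sg m P → TF f →
    Sg m fun v => ∀ i, i < f v → P (Fin.snoc v i)

/-- Π version -/
theorem Cl.pbex {m k : ℕ} (c : Cl M m) {P : (Fin (k+1) → M) → Prop} {f : (Fin k → M) → M}
    (h : Sg m fun v => ¬ P v) (hf : TF f) :
    Sg m fun v => ¬ ∃ i, i < f v ∧ P (Fin.snoc v i) :=
  (c.ball h hf).congr fun v => by push Not; rfl

theorem Cl.pball {m k : ℕ} (c : Cl M m) {P : (Fin (k+1) → M) → Prop} {f : (Fin k → M) → M}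
    (h : Sg m fun v => ¬ P v) (hf : TF f) :
    Sg m fun v => ¬ ∀ i, i < f v → P (Fin.snoc v i) :=
  (c.bex h hf).congr fun v => by push Not; rfl

theorem Cl.zero : Cl M 0 where
  or h h' := (h.not0.imp0 h').congr fun v => by tauto
  and h h' := (h.imp0 h'.not0).not0.congr fun v => by tauto
  bex h hf := (h.not0.ball0 hf).not0.congr fun v => by push Not; rfl
  ball h hf := h.ball0 hf

namespace PAm

theorem lt_succ (hPA : PAm M) (x : M) : x < x + 1 := by
  have := hPA.add_lt_add 0 1 x hPA.zero_lt_one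
  rwa [hPA.add_comm 0, hPA.add_zero, hPA.add_comm 1] at this

theorem not_lt_zero (hPA : PAm M) (x : M) : ¬ x < 0 := by
  intro h
  rcases hPA.zero_le x with h' | h'
  · exact hPA.lt_irrefl _ (hPA.lt_trans _ _ _ h h')
  · exact hPA.lt_irrefl x (by rw [← h'] at h ⊢; exact h)

theorem lt_succ_iff (hPA : PAm M) (x y : M) : x < y + 1 ↔ x < y ∨ x = y := by
  constructor
  · intro h
    rcases hPA.lt_total x y with h' | h' | h'
    · exact Or.inl h'
    · exact Or.inr h'
    · exfalso
      obtain ⟨z, hz⟩ := hPA.sub_exists _ _ h'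
      have hz0 : 0 < z := by
        rcases hPA.zero_le z with h0 | h0
        · exact h0
        · rw [← h0, hPA.add_zero] at hz
          rw [hz] at h'
          exact absurd h' (hPA.lt_irrefl _)
      rcases hPA.discrete z hz0 with h1 | h1
      · have := hPA.add_lt_add _ _ y h1
        rw [hPA.add_comm 1, hPA.add_comm z, hz] at this
        exact hPA.lt_irrefl _ (hPA.lt_trans _ _ _ h this)
      · rw [h1, hz] at h
        exact hPA.lt_irrefl _ h
  · rintro (h | rfl)
    · exact hPA.lt_trans _ _ _ h (hPA.lt_succ y)
    · exact hPA.lt_succ x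

theorem bound2 (hPA : PAm M) (x y : M) : ∃ b, x < b ∧ y < b := by
  rcases hPA.lt_total x y with h | rfl | h
  · exact ⟨y + 1, hPA.lt_trans _ _ _ h (hPA.lt_succ y), hPA.lt_succ y⟩
  · exact ⟨x + 1, hPA.lt_succ x, hPA.lt_succ x⟩
  · exact ⟨x + 1, hPA.lt_succ x, hPA.lt_trans _ _ _ h (hPA.lt_succ x)⟩

theorem add_left_lt (hPA : PAm M) {x y : M} (z : M) (h : x < y) : z + x < z + y := by
  have := hPA.add_lt_add x y z h
  rwa [hPA.add_comm x, hPA.add_comm y] at this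

theorem add_left_cancel (hPA : PAm M) {x y z : M} (h : z + x = z + y) : x = y := by
  rcases hPA.lt_total x y with h' | h' | h'
  · have := hPA.add_left_lt z h'
    rw [h] at this
    exact absurd this (hPA.lt_irrefl _)
  · exact h'
  · have := hPA.add_left_lt z h'
    rw [h] at this
    exact absurd this (hPA.lt_irrefl _)

theorem cell_lt (hPA : PAm M) {u u' v x : M} (h : u < u') (hv : v < x) : u * x + v < u' * x := by
  have h1 : u * x + v < (u + 1) * x := by
    have := hPA.add_left_lt (u * x) hv
    rwa [show (u + 1) * x = u * x + x by
      rw [hPA.mul_comm, hPA.ldistrib, hPA.mul_one, hPA.mul_comm x u] ]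
  have hx : (0 : M) < x := by
    rcases hPA.zero_le x with h0 | h0
    · exact h0
    · rw [← h0] at hv
      exact absurd hv (hPA.not_lt_zero _)
  rcases (hPA.lt_succ_iff (u+1) u').1 (hPA.add_lt_add _ _ 1 h) with h2 | h2
  · exact hPA.lt_trans _ _ _ h1 (hPA.mul_lt_mul _ _ _ h2 hx)
  · rwa [← h2]

theorem le_add (hPA : PAm M) (x v : M) : x < x + v ∨ x = x + v := by
  rcases hPA.zero_le v with h | h
  · left
    have := hPA.add_left_lt x h
    rwa [hPA.add_zero] at this
  · right
    rw [← h, hPA.add_zero]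

theorem cell_ne (hPA : PAm M) {u u' v v' x : M} (h : u < u') (hv : v < x) : u * x + v ≠ u' * x + v' := by
  intro e
  have h1 := hPA.cell_lt h hv
  rw [e] at h1
  rcases hPA.le_add (u' * x) v' with h2 | h2
  · exact hPA.lt_irrefl _ (hPA.lt_trans _ _ _ h1 h2)
  · rw [← h2] at h1
    exact hPA.lt_irrefl _ h1

end PAm

theorem Sg.ex {m k : ℕ} (hPA : PAm M) (c : Cl M m) {P : (Fin (k+1) → M) → Prop}
    (h : Sg (m+1) P) : Sg (m+1) fun v => ∃ y, P (Fin.snoc v y) := by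
  obtain ⟨S, d, e⟩ := h
  -- context v, b, y, z
  have h1 : Sg m fun u : Fin (k+1+1+1) → M =>
      ¬ S (Fin.snoc (Fin.snoc (Fin.init (Fin.init (Fin.init u)))
        (Fin.init u (Fin.last (k+1)))) (u (Fin.last _))) :=
    d.subst (((TM.id.init.init.init).snoc TM.id.init.last).snoc TM.id.last)
  have h2 := c.pbex h1 (f := fun u => Fin.init u (Fin.last k)) TM.id.init.last
  have h3 := c.pbex h2 (f := fun u => u (Fin.last k)) TM.id.last
  refine ⟨_, h3, fun xs => ?_⟩
  simp only [Fin.init_snoc, Fin.snoc_last, e]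
  constructor
  · rintro ⟨y, z, hs⟩
    obtain ⟨b, hb, hb'⟩ := hPA.bound2 y z
    exact ⟨b, y, hb, z, hb', hs⟩
  · rintro ⟨b, y, _, z, _, hs⟩
    exact ⟨y, z, hs⟩

theorem Sg.or_succ {m k : ℕ} (c : Cl M m) {P Q : (Fin k → M) → Prop}
    (h : Sg (m+1) P) (h' : Sg (m+1) Q) : Sg (m+1) fun v => P v ∨ Q v := by
  obtain ⟨S, d, e⟩ := h
  obtain ⟨S', d', e'⟩ := h'
  refine ⟨fun v => S v ∨ S' v, (c.and d d').congr fun v => by tauto, fun xs => ?_⟩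
  beta_reduce
  rw [e, e']
  exact exists_or.symm

theorem Sg.and_succ {m k : ℕ} (hPA : PAm M) (c : Cl M m) {P Q : (Fin k → M) → Prop}
    (h : Sg (m+1) P) (h' : Sg (m+1) Q) : Sg (m+1) fun v => P v ∧ Q v := by
  obtain ⟨S, d, e⟩ := h
  obtain ⟨S', d', e'⟩ := h'
  have key : ∀ {S : (Fin (k+1) → M) → Prop}, Sg m (fun v => ¬ S v) →
      Sg m fun u : Fin (k+1) → M => ¬ ∃ y, y < u (Fin.last k) ∧ S (Fin.snoc (Fin.init u) y) := by
    intro S d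
    have h1 : Sg m fun u : Fin (k+1+1) → M =>
        ¬ S (Fin.snoc (Fin.init (Fin.init u)) (u (Fin.last _))) :=
      d.subst ((TM.id.init.init).snoc TM.id.last)
    have h2 := c.pbex h1 (f := fun u => u (Fin.last k)) TM.id.last
    simpa only [Fin.init_snoc, Fin.snoc_last] using h2
  refine ⟨fun u => (∃ y, y < u (Fin.last k) ∧ S (Fin.snoc (Fin.init u) y)) ∧
    (∃ y, y < u (Fin.last k) ∧ S' (Fin.snoc (Fin.init u) y)),
    (c.or (key d) (key d')).congr fun v => not_and_or.symm, fun xs => ?_⟩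
  simp only [Fin.init_snoc, Fin.snoc_last, e, e']
  constructor
  · rintro ⟨⟨y, hs⟩, ⟨z, hs'⟩⟩
    obtain ⟨b, hb, hb'⟩ := hPA.bound2 y z
    exact ⟨b, ⟨y, hb, hs⟩, ⟨z, hb', hs'⟩⟩
  · rintro ⟨b, ⟨y, _, hs⟩, ⟨z, _, hs'⟩⟩
    exact ⟨⟨y, hs⟩, ⟨z, hs'⟩⟩

theorem Sg.bex_succ {m k : ℕ} (c : Cl M m) {P : (Fin (k+1) → M) → Prop}
    {f : (Fin k → M) → M} (h : Sg (m+1) P) (hf : TF f) :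
    Sg (m+1) fun v => ∃ i, i < f v ∧ P (Fin.snoc v i) := by
  obtain ⟨S, d, e⟩ := h
  -- context v, y, i
  have h1 : Sg m fun u : Fin (k+1+1) → M =>
      ¬ S (Fin.snoc (Fin.snoc (Fin.init (Fin.init u)) (u (Fin.last _)))
        (Fin.init u (Fin.last k))) :=
    d.subst (((TM.id.init.init).snoc TM.id.last).snoc TM.id.init.last)
  have hf' : TF fun u : Fin (k+1) → M => f (Fin.init u) := by
    obtain ⟨t, ht⟩ := hf
    refine ⟨t.liftAt 1 k, fun v => ?_⟩
    conv_rhs => rw [← Fin.snoc_init_self v]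
    rw [realize_lift_snoc]
    exact ht _
  refine ⟨_, c.pbex h1 hf', fun xs => ?_⟩
  simp only [Fin.init_snoc, Fin.snoc_last, e]
  constructor
  · rintro ⟨i, hi, y, hs⟩
    exact ⟨y, i, hi, hs⟩
  · rintro ⟨y, i, hi, hs⟩
    exact ⟨i, hi, y, hs⟩

/-- Induction for semantic Σ_m sets -/
def ISg (M : Type) [lang.Structure M] (m : ℕ) : Prop :=
  ∀ P : (Fin 1 → M) → Prop, Sg m P → P ![0] → (∀ x, P ![x] → P ![x + 1]) → ∀ x, P ![x]

theorem snoc_zero (w : Fin 0 → M) (x : M) : (Fin.snoc w x : Fin 1 → M) = ![x] := by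
  funext i; fin_cases i; rfl

theorem snoc_one (a x : M) : (Fin.snoc (![a] : Fin 1 → M) x : Fin 2 → M) = ![a, x] := by
  funext i; fin_cases i <;> rfl

theorem snoc_two (a b x : M) : (Fin.snoc (![a, b] : Fin 2 → M) x : Fin 3 → M) = ![a, b, x] := by
  funext i; fin_cases i <;> rfl

theorem Sg.ball_succ {m k : ℕ} (hPA : PAm M) (c : Cl M m) (hI : ISg M (m+1))
    {P : (Fin (k+1) → M) → Prop}
    {f : (Fin k → M) → M} (h : Sg (m+1) P) (hf : TF f) :
    Sg (m+1) fun v => ∀ i, i < f v → P (Fin.snoc v i) := by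
  obtain ⟨S, d, e⟩ := h
  -- collection for an arbitrary bound given by a term function
  have gen : ∀ {j : ℕ} {g : (Fin j → M) → Fin k → M} {a : (Fin j → M) → M},
      TM (fun u : Fin (j+1+1+1) → M => g (Fin.init (Fin.init (Fin.init u)))) →
      TF (fun u : Fin (j+1) → M => a (Fin.init u)) →
      Sg (m+1) fun v : Fin j → M =>
        ∃ b, ∀ i, i < a v → ∃ y, y < b ∧ S (Fin.snoc (Fin.snoc (g v) i) y) := by
    intro j g a hg ha
    -- context v, b, i, y
    have h1 : Sg m fun u : Fin (j+1+1+1) → M =>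
        ¬ S (Fin.snoc (Fin.snoc (g (Fin.init (Fin.init (Fin.init u))))
          (Fin.init u (Fin.last (j+1)))) (u (Fin.last _))) :=
      d.subst ((hg.snoc TM.id.init.last).snoc TM.id.last)
    have h2 := c.pbex h1 (f := fun u => Fin.init u (Fin.last j)) TM.id.init.last
    have h3 := c.pball h2 ha
    refine ⟨_, h3, fun xs => ?_⟩
    simp only [Fin.init_snoc, Fin.snoc_last]
  have hf' : TF fun u : Fin (k+1) → M => f (Fin.init u) := by
    obtain ⟨t, ht⟩ := hf
    refine ⟨t.liftAt 1 k, fun v => ?_⟩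
    conv_rhs => rw [← Fin.snoc_init_self v]
    rw [realize_lift_snoc]
    exact ht _
  refine (gen (g := fun v => v) TM.id.init.init.init hf').congr fun v => ?_
  simp only [e]
  constructor
  · rintro ⟨b, hb⟩ i hi
    obtain ⟨y, _, hy⟩ := hb i hi
    exact ⟨y, hy⟩
  · intro H
    have hs : Sg (m+1) fun w : Fin 1 → M => (f v < w 0) ∨
        ∃ b, ∀ i, i < w 0 → ∃ y, y < b ∧ S (Fin.snoc (Fin.snoc v i) y) := by
      refine Sg.or_succ c (Sg.of_zero (Sg.lt0 (TF.const _) (TM.id.app 0))) ?_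
      exact gen (j := 1) (g := fun _ => v) (a := fun w => w 0)
        (fun i => TF.const _) (TM.id.init.app 0)
    have := hI _ hs (Or.inr ⟨0, fun i hi => absurd hi (hPA.not_lt_zero i)⟩) ?_ (f v)
    · rcases this with h | h
      · exact absurd h (hPA.lt_irrefl _)
      · exact h
    · rintro x (h | ⟨b, hb⟩)
      · exact Or.inl (hPA.lt_trans _ _ _ h (hPA.lt_succ x))
      · simp only [Matrix.cons_val_zero] at hb ⊢
        rcases hPA.lt_total (f v) x with h | h | h
        · exact Or.inl (hPA.lt_trans _ _ _ h (hPA.lt_succ x))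
        · rw [h]
          exact Or.inl (hPA.lt_succ x)
        · right
          obtain ⟨y, hy⟩ := H x h
          obtain ⟨b', h1, h2⟩ := hPA.bound2 b y
          refine ⟨b', fun i hi => ?_⟩
          rcases (hPA.lt_succ_iff i x).1 hi with hi | rfl
          · obtain ⟨z, hz, hz'⟩ := hb i hi
            exact ⟨z, hPA.lt_trans _ _ _ hz h1, hz'⟩
          · exact ⟨y, h2, hy⟩

theorem Cl.succ {m : ℕ} (hPA : PAm M) (c : Cl M m) (hI : ISg M (m+1)) : Cl M (m+1) where
  or := Sg.or_succ c
  and := Sg.and_succ hPA c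
  bex := Sg.bex_succ c
  ball := Sg.ball_succ hPA c hI

theorem ISg.down {m : ℕ} (h : ISg M (m+1)) : ISg M m := fun P hP => h P hP.succ

theorem Cl.all (hPA : PAm M) : ∀ {m : ℕ}, ISg M m → Cl M m
  | 0, _ => Cl.zero
  | _ + 1, h => Cl.succ hPA (Cl.all hPA h.down) h

/-- semantic to syntactic -/
theorem Sg.toFm {m : ℕ} : ∀ {k : ℕ} {P : (Fin k → M) → Prop}, Sg m P →
    (∃ φ : lang.BoundedFormula M k, SigmaFm m k φ ∧ ∀ xs, P xs ↔ φ.Realize id xs) ∧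
    (∃ φ : lang.BoundedFormula M k, PiFm m k φ ∧ ∀ xs, ¬ P xs ↔ φ.Realize id xs) := by
  induction m with
  | zero =>
    intro k P h
    obtain ⟨φ, d, e⟩ := h
    obtain ⟨φ', d', e'⟩ := Sg.not0 ⟨φ, d, e⟩
    exact ⟨⟨φ, .delta0 _ _ d, e⟩, ⟨φ', .delta0 _ _ d', e'⟩⟩
  | succ m ih =>
    rintro k P ⟨S, d, e⟩
    obtain ⟨⟨φ, d1, e1⟩, ⟨ψ, d2, e2⟩⟩ := ih d
    refine ⟨⟨_, .ex m k (.ofPi m _ d2), fun xs => ?_⟩, ⟨_, .all m k (.ofSigma m _ d1), fun xs => ?_⟩⟩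
    · simp only [BoundedFormula.realize_ex, ← e2, e, not_not]
    · simp only [BoundedFormula.realize_all, ← e1, e, not_exists]

theorem term_fin {k : ℕ} (t : lang.Term (M ⊕ Fin k)) :
    ∃ s : Finset M, ∀ v v' : M → M, (∀ a ∈ s, v a = v' a) → ∀ xs : Fin k → M,
      t.realize (Sum.elim v xs) = t.realize (Sum.elim v' xs) := by
  classical
  induction t with
  | var x =>
    rcases x with a | i
    · exact ⟨{a}, fun v v' h xs => h a (by simp)⟩
    · exact ⟨∅, fun v v' h xs => rfl⟩
  | func f ts ih =>
    choose s hs using ih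
    refine ⟨Finset.univ.biUnion s, fun v v' h xs => ?_⟩
    simp only [Term.realize_func]
    congr 1
    funext i
    exact hs i v v' (fun a ha => h a (by simp only [Finset.mem_biUnion]; exact ⟨i, by simp, ha⟩)) xs

theorem fm_fin {k : ℕ} (φ : lang.BoundedFormula M k) :
    ∃ s : Finset M, ∀ v v' : M → M, (∀ a ∈ s, v a = v' a) → ∀ xs : Fin k → M,
      (φ.Realize v xs ↔ φ.Realize v' xs) := by
  classical
  induction φ with
  | falsum => exact ⟨∅, fun _ _ _ _ => Iff.rfl⟩
  | equal t u =>
    obtain ⟨s, hs⟩ := term_fin t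
    obtain ⟨s', hs'⟩ := term_fin u
    refine ⟨s ∪ s', fun v v' h xs => ?_⟩
    simp only [BoundedFormula.Realize]
    rw [hs v v' (fun a ha => h a (by simp [ha])), hs' v v' (fun a ha => h a (by simp [ha]))]
  | rel R ts =>
    choose s hs using fun i => term_fin (ts i)
    refine ⟨Finset.univ.biUnion s, fun v v' h xs => ?_⟩
    simp only [BoundedFormula.Realize]
    have : (fun i => (ts i).realize (Sum.elim v xs)) = fun i => (ts i).realize (Sum.elim v' xs) := by
      funext i
      exact hs i v v' (fun a ha => h a
        (by simp only [Finset.mem_biUnion]; exact ⟨i, by simp, ha⟩)) xs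
    rw [this]
  | imp f g ih1 ih2 =>
    obtain ⟨s, hs⟩ := ih1
    obtain ⟨s', hs'⟩ := ih2
    refine ⟨s ∪ s', fun v v' h xs => ?_⟩
    simp only [BoundedFormula.Realize]
    rw [hs v v' (fun a ha => h a (by simp [ha])), hs' v v' (fun a ha => h a (by simp [ha]))]
  | all f ih =>
    obtain ⟨s, hs⟩ := ih
    refine ⟨s, fun v v' h xs => ?_⟩
    simp only [BoundedFormula.Realize]
    exact forall_congr' fun a => hs v v' h _

theorem Sg.toDef {m k : ℕ} {P : (Fin k → M) → Prop} (h : Sg m P) : IsSigmaDef m M P := by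
  classical
  obtain ⟨φ, d, e⟩ := h.toFm.1
  obtain ⟨s, hs⟩ := fm_fin φ
  let σ : M ⊕ Fin k → lang.Term ((Fin k ⊕ Fin s.card) ⊕ Fin 0) :=
    Sum.elim (fun a => if ha : a ∈ s then Term.var (Sum.inl (Sum.inr (s.equivFin ⟨a, ha⟩)))
      else Term.func (L := lang) (l := 0) Func.zero ![])
      (fun i => Term.var (Sum.inl (Sum.inl i)))
  obtain ⟨ψ, d', e'⟩ := sig_subst M d σ
  refine ⟨s.card, ψ, fun i => ((s.equivFin.symm i : s) : M), d', fun v => ?_⟩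
  rw [e' _ _, e]
  have : (fun i => (σ (Sum.inr i)).realize (Sum.elim (Sum.elim v
      (fun i => ((s.equivFin.symm i : s) : M))) finZeroElim)) = v := by
    funext i
    simp [σ]
  rw [this]
  apply hs
  intro a ha
  simp [σ, ha]

mutual
theorem sig_toSg (hPA : PAm M) {α : Type} : ∀ {m j : ℕ} {φ : lang.BoundedFormula α j}
    (_ : SigmaFm m j φ) (_ : ∀ i < m, Cl M i) {k : ℕ}
    (σ : α ⊕ Fin j → lang.Term (M ⊕ Fin k)),
    Sg m fun v : Fin k → M =>
      φ.Realize (fun a => (σ (Sum.inl a)).realize (Sum.elim id v))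
        (fun i => (σ (Sum.inr i)).realize (Sum.elim id v))
  | _, _, _, .delta0 m n h, _, k, σ => by
    obtain ⟨ψ, d, e⟩ := d0_subst M h σ
    exact Sg.of_zero ⟨ψ, d, fun xs => (e id xs).symm⟩
  | _, _, _, .ofPi m n h, c, k, σ =>
    Sg.ofPi (pi_toSg hPA h (fun i hi => c i (by omega)) σ)
  | _, _, _, .ex m n h, c, k, σ => by
    have := Sg.ex hPA (c m (by omega)) (sig_toSg hPA h c (upS σ))
    refine this.congr fun v => ?_
    simp only [BoundedFormula.realize_ex, upS_inl, upS_inr]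
theorem pi_toSg (hPA : PAm M) {α : Type} : ∀ {m j : ℕ} {φ : lang.BoundedFormula α j}
    (_ : PiFm m j φ) (_ : ∀ i < m, Cl M i) {k : ℕ}
    (σ : α ⊕ Fin j → lang.Term (M ⊕ Fin k)),
    Sg m fun v : Fin k → M =>
      ¬ φ.Realize (fun a => (σ (Sum.inl a)).realize (Sum.elim id v))
        (fun i => (σ (Sum.inr i)).realize (Sum.elim id v))
  | _, _, _, .delta0 m n h, _, k, σ => by
    obtain ⟨ψ, d, e⟩ := d0_subst M h σ
    exact Sg.of_zero (Sg.not0 ⟨ψ, d, fun xs => (e id xs).symm⟩)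
  | _, _, _, .ofSigma m n h, c, k, σ =>
    Sg.ofPi ((sig_toSg hPA h (fun i hi => c i (by omega)) σ).congr fun v => by rw [not_not])
  | _, _, _, .all m n h, c, k, σ => by
    have := Sg.ex hPA (c m (by omega)) (pi_toSg hPA h c (upS σ))
    refine this.congr fun v => ?_
    simp only [BoundedFormula.realize_all, upS_inl, upS_inr, not_forall]
end

theorem Sg.ofDef {m k : ℕ} (hPA : PAm M) (c : ∀ i < m, Cl M i) {P : (Fin k → M) → Prop}
    (h : IsSigmaDef m M P) : Sg m P := by
  obtain ⟨p, φ, w, d, e⟩ := h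
  refine (sig_toSg hPA d c (k := k) (Sum.elim (Sum.elim (fun i => Term.var (Sum.inr i))
    (fun i => Term.var (Sum.inl (w i)))) finZeroElim)).congr fun v => ?_
  rw [e]
  have h1 : (fun a : Fin k ⊕ Fin p => Term.realize (L := lang) (Sum.elim id v)
      ((Sum.elim (Sum.elim (fun i => Term.var (Sum.inr i))
    (fun i => Term.var (Sum.inl (w i)))) finZeroElim :
      (Fin k ⊕ Fin p) ⊕ Fin 0 → lang.Term (M ⊕ Fin k)) (Sum.inl a))) = Sum.elim v w := by
    funext a
    rcases a with a | a <;> rfl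
  rw [h1]
  exact iff_of_eq (congrArg _ (Subsingleton.elim _ _))

theorem ISig.toISg {m : ℕ} (h : ISig m M) : ISg M m := by
  intro P hP h0 hs x
  refine h {x | P ![x]} ?_ h0 hs x
  have : (fun v : Fin 1 → M => v 0 ∈ {x | P ![x]}) = P := by
    funext v
    show P ![v 0] = P v
    congr 1
    funext i
    fin_cases i; rfl
  show IsSigmaDef m M _
  rw [this]
  exact hP.toDef

/-- least number principle for Π_m -/
theorem lnp {m : ℕ} (hPA : PAm M) (c : Cl M m) (hI : ISg M m) {T : (Fin 1 → M) → Prop}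
    (h : Sg m fun v => ¬ T v) {b : M} (hb : T ![b]) :
    ∃ b, T ![b] ∧ ∀ b', b' < b → ¬ T ![b'] := by
  by_contra hc
  push Not at hc
  have h1 : Sg m fun v : Fin 1 → M => ∀ i, i < v 0 → ¬ T ![i] := by
    have := c.ball (f := fun v : Fin 1 → M => v 0)
      (h.subst (g := fun v : Fin 2 → M => Fin.snoc (fun i : Fin 0 => i.elim0) (v (Fin.last 1)))
        (TM.snoc (fun i => i.elim0) TM.id.last)) (TM.id.app 0)
    simpa only [Fin.snoc_last, snoc_zero] using this
  have h2 := hI _ h1 (fun i hi => absurd hi (hPA.not_lt_zero i)) ?_ (b + 1)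
  · exact h2 b (hPA.lt_succ b) hb
  · intro x hx i hi
    rcases (hPA.lt_succ_iff i x).1 hi with hi | rfl
    · exact hx i hi
    · intro hT
      obtain ⟨b', hb', hT'⟩ := hc _ hT
      exact hx b' hb' hT'

theorem vec2_eta (v : Fin 2 → M) : (![v 0, v 1] : Fin 2 → M) = v := by
  funext i; fin_cases i <;> rfl

theorem TM.vec2 {j : ℕ} {f g : (Fin j → M) → M} (hf : TF f) (hg : TF g) :
    TM fun v => (![f v, g v] : Fin 2 → M) := by
  intro i; fin_cases i
  · exact hf
  · exact hg

theorem TM.vec3 {j : ℕ} {f g h : (Fin j → M) → M} (hf : TF f) (hg : TF g) (hh : TF h) :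
    TM fun v => (![f v, g v, h v] : Fin 3 → M) := by
  intro i; fin_cases i
  · exact hf
  · exact hg
  · exact hh

/-- Uniformization of Σ_{m+1} relations -/
theorem uniformize {m : ℕ} (hPA : PAm M) (c : Cl M m) (hI : ISg M m) {R : (Fin 2 → M) → Prop}
    (h : Sg (m+1) R) : ∃ H : (Fin 2 → M) → Prop, Sg (m+1) H ∧
      (∀ u z, H ![u, z] → R ![u, z]) ∧
      (∀ u z z', H ![u, z] → H ![u, z'] → z = z') ∧
      (∀ u z, R ![u, z] → ∃ z', H ![u, z']) := by
  obtain ⟨S, d, e⟩ := h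
  have e2 : ∀ u z, R ![u, z] ↔ ∃ w, S ![u, z, w] := fun u z => by
    rw [e]
    simp only [snoc_two]
  -- W(u,b,z)
  have hW : Sg m fun v : Fin 3 → M => ¬ ∃ w, w < v 1 ∧ S ![v 0, v 2, w] := by
    have h1 : Sg m fun v : Fin (3+1) → M => ¬ S ![Fin.init v 0, Fin.init v 2, v (Fin.last 3)] :=
      d.subst (TM.vec3 (TM.id.init.app 0) (TM.id.init.app 2) TM.id.last)
    have h2 := c.pbex h1 (f := fun v : Fin 3 → M => v 1) (TM.id.app 1)
    simpa only [Fin.init_snoc, Fin.snoc_last] using h2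
  -- T(u,b)
  have hT : Sg m fun v : Fin 2 → M => ¬ ∃ z, z < v 1 ∧ ∃ w, w < v 1 ∧ S ![v 0, z, w] := by
    have h1 : Sg m fun v : Fin (2+1) → M => ¬ ∃ w, w < Fin.init v 1 ∧
        S ![Fin.init v 0, v (Fin.last 2), w] := hW
    have h2 := c.pbex h1 (f := fun v : Fin 2 → M => v 1) (TM.id.app 1)
    simpa only [Fin.init_snoc, Fin.snoc_last] using h2
  let W : M → M → M → Prop := fun u b z => ∃ w, w < b ∧ S ![u, z, w]
  let T : M → M → Prop := fun u b => ∃ z, z < b ∧ W u b z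
  have hT' : Sg m fun v : Fin 2 → M => ∀ b', b' < v 1 → ¬ T (v 0) b' := by
    have h1 : Sg m fun v : Fin (2+1) → M => ¬ T (Fin.init v 0) (v (Fin.last 2)) :=
      hT.subst (TM.vec2 (TM.id.init.app 0) TM.id.last)
    have h2 := c.ball h1 (f := fun v : Fin 2 → M => v 1) (TM.id.app 1)
    simpa only [Fin.init_snoc, Fin.snoc_last] using h2
  have hW' : Sg m fun v : Fin 3 → M => ∀ z', z' < v 2 → ¬ W (v 0) (v 1) z' := by
    have h1 : Sg m fun v : Fin (3+1) → M =>
        ¬ W (Fin.init v 0) (Fin.init v 1) (v (Fin.last 3)) :=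
      hW.subst (TM.vec3 (TM.id.init.app 0) (TM.id.init.app 1) TM.id.last)
    have h2 := c.ball h1 (f := fun v : Fin 3 → M => v 2) (TM.id.app 2)
    simpa only [Fin.init_snoc, Fin.snoc_last] using h2
  let G : M → M → M → Prop := fun u b z =>
    (T u b ∧ ∀ b', b' < b → ¬ T u b') ∧ (z < b ∧ W u b z) ∧ ∀ z', z' < z → ¬ W u b z'
  have hG : Sg (m+1) fun v : Fin 3 → M => G (v 0) (v 1) (v 2) := by
    refine Sg.and_succ hPA c (Sg.and_succ hPA c ?_ ?_) (Sg.and_succ hPA c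
      (Sg.and_succ hPA c ?_ ?_) ?_)
    · exact Sg.ofPi (hT.subst (TM.vec2 (TM.id.app 0) (TM.id.app 1)))
    · exact (hT'.subst (TM.vec2 (TM.id.app 0) (TM.id.app 1))).succ
    · exact Sg.of_zero (Sg.lt0 (TM.id.app 2) (TM.id.app 1))
    · exact Sg.ofPi hW
    · exact hW'.succ
  refine ⟨fun v => ∃ b, G (v 0) b (v 1), ?_, ?_, ?_, ?_⟩
  · have h1 : Sg (m+1) fun v : Fin (2+1) → M => G (Fin.init v 0) (v (Fin.last 2)) (Fin.init v 1) :=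
      hG.subst (TM.vec3 (TM.id.init.app 0) TM.id.last (TM.id.init.app 1))
    have h2 := Sg.ex hPA c h1
    simpa only [Fin.init_snoc, Fin.snoc_last] using h2
  · rintro u z ⟨b, _, ⟨_, w, _, hw⟩, _⟩
    exact (e2 u z).2 ⟨w, hw⟩
  · rintro u z z' ⟨b, ⟨hT1, hm1⟩, ⟨_, hw1⟩, hl1⟩ ⟨b', ⟨hT2, hm2⟩, ⟨_, hw2⟩, hl2⟩
    have hbb : b = b' := by
      rcases hPA.lt_total b b' with h | h | h
      · exact absurd hT1 (hm2 _ h)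
      · exact h
      · exact absurd hT2 (hm1 _ h)
    subst hbb
    rcases hPA.lt_total z z' with h | h | h
    · exact absurd hw1 (hl2 _ h)
    · exact h
    · exact absurd hw2 (hl1 _ h)
  · intro u z hR
    obtain ⟨w, hw⟩ := (e2 u z).1 hR
    obtain ⟨b, hb1, hb2⟩ := hPA.bound2 z w
    have hTb : T u b := ⟨z, hb1, w, hb2, hw⟩
    obtain ⟨b0, hb0, hmin⟩ := lnp hPA c hI (T := fun v => T u (v 0))
      (hT.subst (TM.vec2 (TF.const u) (TM.id.app 0))) hTb
    obtain ⟨z1, hz1, hz1'⟩ := hb0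
    obtain ⟨z0, hz0, hzmin⟩ := lnp hPA c hI (T := fun v => W u b0 (v 0))
      (hW.subst (TM.vec3 (TF.const u) (TF.const b0) (TM.id.app 0))) hz1'
    refine ⟨z0, b0, ⟨⟨z1, hz1, hz1'⟩, hmin⟩, ⟨?_, hz0⟩, hzmin⟩
    rcases hPA.lt_total z0 z1 with h | h | h
    · exact hPA.lt_trans _ _ _ h hz1
    · have h' : z0 = z1 := h
      rw [h']; exact hz1
    · exact absurd hz1' (hzmin _ h)

end Helpers

/-- For every `n ≥ 1`, PA⁻ + IΣn proves fairFRT¹₂(Σ_{n+1}). -/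
theorem statement_8 (n : ℕ) (hn : 1 ≤ n) (M : Type) [lang.Structure M]
    (hPA : PAm M) (hI : ISig n M) :
    FairFRT1 M (n + 1) ((1 : M) + 1) := by
  classical
  have hIs : ISg M n := hI.toISg
  have cn : Cl M n := Cl.all hPA hIs
  have call : ∀ i < n + 1, Cl M i := by
    have : ∀ d i, ISg M (i + d) → ISg M i := by
      intro d
      induction d with
      | zero => intro i h; exact h
      | succ d ih => intro i h; exact ih i h.down
    intro i hi
    refine Cl.all hPA (this (n - i) i ?_)
    rwa [Nat.add_sub_cancel' (by omega)]
  intro x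
  refine ⟨x * x, fun C hC => ?_⟩
  obtain ⟨hdef, htot, -⟩ := hC
  have hS : Sg (n+1) fun v : Fin 2 → M => C (v 0) (v 1) := Sg.ofDef hPA call hdef
  by_cases hA : ∃ u, u < x ∧ ∀ v, v < x → C (u * x + v) 0
  · obtain ⟨u, hu, hv⟩ := hA
    refine ⟨fun a z => z = u * x + a, ⟨?_, ?_, ?_, ?_⟩, 0, ?_⟩
    · exact Sg.toDef (Sg.of_zero (Sg.eq0 (TM.id.app 1) (TF.add (TF.const _) (TM.id.app 0))))
    · intro a ha
      exact ⟨_, hPA.cell_lt hu ha, rfl⟩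
    · rintro a v v' _ rfl rfl; rfl
    · intro a a' v _ _ h h'
      exact hPA.add_left_cancel (h.symm.trans h')
    · rintro a v ha rfl
      exact hv a ha
  · push Not at hA
    let R : M → M → Prop := fun u z => (∃ v, v < x ∧ z = u * x + v) ∧ C z 1
    have hR : Sg (n+1) fun v : Fin 2 → M => R (v 0) (v 1) := by
      refine Sg.and_succ hPA cn (Sg.of_zero ?_) ?_
      · have h1 : Sg 0 fun v : Fin (2+1) → M =>
            Fin.init v 1 = Fin.init v 0 * x + v (Fin.last 2) :=
          Sg.eq0 (TM.id.init.app 1) (TF.add (TF.mul (TM.id.init.app 0) (TF.const x)) TM.id.last)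
        have h2 := Cl.zero.bex h1 (f := fun _ => x) (TF.const x)
        simpa only [Fin.init_snoc, Fin.snoc_last] using h2
      · exact hS.subst (TM.vec2 (TM.id.app 1) (TF.const 1))
    obtain ⟨H, hH, hHR, hfun, hdom⟩ := uniformize hPA cn hIs hR
    refine ⟨fun u z => H ![u, z], ⟨?_, ?_, ?_, ?_⟩, 1, ?_⟩
    · refine Sg.toDef (hH.congr fun v => ?_)
      beta_reduce
      rw [vec2_eta]
    · intro u hu
      obtain ⟨v, hv, hc⟩ := hA u hu
      obtain ⟨i, hi, hci⟩ := htot _ (hPA.cell_lt hu hv)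
      have hR1 : R u (u * x + v) := by
        refine ⟨⟨v, hv, rfl⟩, ?_⟩
        rcases (hPA.lt_succ_iff i 1).1 hi with h | h
        · exfalso
          have h0 : i = 0 := by
            rcases hPA.zero_le i with h' | h'
            · rcases hPA.discrete i h' with h'' | h''
              · exact absurd (hPA.lt_trans _ _ _ h h'') (hPA.lt_irrefl _)
              · rw [← h''] at h
                exact absurd h (hPA.lt_irrefl _)
            · exact h'.symm
          rw [h0] at hci
          exact hc hci
        · rwa [h] at hci
      obtain ⟨z, hz⟩ := hdom u _ hR1
      obtain ⟨⟨v', hv', hz'⟩, _⟩ := hHR u z hz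
      refine ⟨z, ?_, hz⟩
      have hz2 : z = u * x + v' := hz'
      rw [hz2]
      exact hPA.cell_lt hu hv'
    · intro u v v' _ h h'
      exact hfun u v v' h h'
    · intro u u' z _ _ h h'
      obtain ⟨⟨v, hv, e⟩, _⟩ := hHR u z h
      obtain ⟨⟨v', hv', e'⟩, _⟩ := hHR u' z h'
      have e1 : u * x + v = u' * x + v' := e.symm.trans e'
      rcases hPA.lt_total u u' with hl | hl | hl
      · exact absurd e1 (hPA.cell_ne hl hv)
      · exact hl
      · exact absurd e1.symm (hPA.cell_ne hl hv')
    · intro u z _ h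
      exact (hHR u z h).2

end ArithFC
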